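/- For every integer n > 1, o1(n) + o1(n-1) = pod(n). -/

import Mathlib

/-- No even part is repeated (all even parts are distinct). -/
def EvenDistinct {n : ℕ} (p : n.Partition) : Prop :=
  ∀ i, Even i → p.parts.count i ≤ 1

/-- No odd part is repeated (all odd parts are distinct). -/
def OddDistinct {n : ℕ} (p : n.Partition) : Prop :=
  ∀ i, Odd i → p.parts.count i ≤ 1

/-- The largest part of a partition (0 for the empty partition of 0). -/
def maxPart {n : ℕ} (p : n.Partition) : ℕ := p.parts.sup

/-- Number of partitions of n with no odd part repeated. -/
noncomputable def pod (n : ℕ) : ℕ := Nat.card {p : n.Partition // OddDistinct p}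

/-- Number of partitions of n with no odd part repeated and largest part even. -/
noncomputable def o1 (n : ℕ) : ℕ :=
  Nat.card {p : n.Partition // OddDistinct p ∧ p.parts ≠ 0 ∧ Even (maxPart p)}

/-!
For `n > 1`, raising the largest part by one is a bijection from the partitions of `n - 1` with
distinct odd parts and even largest part to the partitions of `n` with distinct odd parts and odd
largest part. The inverse lowers the largest part by one: an odd largest part is not repeated, so
the lowered part is still the largest, and it is positive because the largest part is not `1`, as
`1` cannot be repeated and `n > 1`.
-/

theorem multiset_sup_mem {α : Type*} [LinearOrder α] [OrderBot α] {s : Multiset α}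
    (hs : s ≠ 0) : s.sup ∈ s := by
  obtain ⟨a, ha, hsup⟩ :=
    s.toFinset.exists_mem_eq_sup (Multiset.toFinset_nonempty.2 hs) id
  rw [Finset.sup_def, Multiset.map_id, Multiset.toFinset_val, Multiset.sup_dedup] at hsup
  exact hsup ▸ Multiset.mem_toFinset.1 ha

theorem card_subtype_and_add_card_subtype_and_not {α : Type*} [Finite α] (P Q : α → Prop) :
    Nat.card {a // P a ∧ Q a} + Nat.card {a // P a ∧ ¬Q a} = Nat.card {a // P a} :=
  Set.ncard_inter_add_ncard_sdiff_eq_ncard {a | P a} {a | Q a}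

section MaxPart

variable {n m a b : ℕ} {p : n.Partition} {q : (n + 1).Partition}

theorem parts_ne_zero (hn : n ≠ 0) (p : n.Partition) : p.parts ≠ 0 := by
  intro hp
  exact hn (by rw [← p.parts_sum, hp, Multiset.sum_zero])

theorem le_maxPart {i : ℕ} (hi : i ∈ p.parts) : i ≤ maxPart p :=
  Multiset.le_sup hi

theorem maxPart_mem (hp : p.parts ≠ 0) : maxPart p ∈ p.parts :=
  multiset_sup_mem hp

theorem parts_ne_zero_of_maxPart_pos (hp : 0 < maxPart p) : p.parts ≠ 0 := by
  intro h
  simp [maxPart, h] at hp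

theorem le_maxPart_of_mem_erase {i : ℕ} (hi : i ∈ p.parts.erase (maxPart p)) : i ≤ maxPart p :=
  le_maxPart (Multiset.mem_of_mem_erase hi)

theorem maxPart_add_sum_erase (p : n.Partition) :
    maxPart p + (p.parts.erase (maxPart p)).sum = n := by
  by_cases hp : p.parts = 0
  · simp [maxPart, hp, ← p.parts_sum]
  · rw [Multiset.sum_erase (maxPart_mem hp), p.parts_sum]

/-- The partition obtained from `p` by replacing one copy of its largest part with `a`, which need
not be the largest part of the result. The size `m = n + a - maxPart p` of the result is encoded by
an equation, so that no truncated subtraction occurs. -/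
def replaceMaxPart (p : n.Partition) (a : ℕ) (ha : 0 < a) (h : m + maxPart p = n + a) :
    m.Partition where
  parts := a ::ₘ p.parts.erase (maxPart p)
  parts_pos := by
    intro i hi
    rcases Multiset.mem_cons.1 hi with rfl | hi
    · exact ha
    · exact p.parts_pos (Multiset.mem_of_mem_erase hi)
  parts_sum := by
    have hsum := maxPart_add_sum_erase p
    rw [Multiset.sum_cons]
    omega

theorem maxPart_replaceMaxPart (ha : 0 < a) (h : m + maxPart p = n + a)
    (hle : ∀ i ∈ p.parts.erase (maxPart p), i ≤ a) :
    maxPart (replaceMaxPart p a ha h) = a := by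
  rw [maxPart, replaceMaxPart, Multiset.sup_cons]
  exact sup_eq_left.2 (Multiset.sup_le.2 hle)

theorem replaceMaxPart_replaceMaxPart (ha : 0 < a) (h : m + maxPart p = n + a)
    (hle : ∀ i ∈ p.parts.erase (maxPart p), i ≤ a) (hb : 0 < b)
    (h' : n + maxPart (replaceMaxPart p a ha h) = m + b) :
    replaceMaxPart (replaceMaxPart p a ha h) b hb h' = p := by
  have hmax := maxPart_replaceMaxPart ha h hle
  obtain rfl : b = maxPart p := by omega
  ext1
  change maxPart p ::ₘ (a ::ₘ p.parts.erase (maxPart p)).erase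
    (maxPart (replaceMaxPart p a ha h)) = p.parts
  rw [hmax, Multiset.erase_cons_head,
    Multiset.cons_erase (maxPart_mem (parts_ne_zero_of_maxPart_pos hb))]

theorem oddDistinct_replaceMaxPart (hp : OddDistinct p) (ha : 0 < a) (h : m + maxPart p = n + a)
    (hnotMem : Odd a → a ∉ p.parts.erase (maxPart p)) :
    OddDistinct (replaceMaxPart p a ha h) := by
  intro i hi
  change (a ::ₘ p.parts.erase (maxPart p)).count i ≤ 1
  obtain rfl | hne := eq_or_ne i a
  · rw [Multiset.count_cons_self, Multiset.count_eq_zero_of_notMem (hnotMem hi)]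
  · rw [Multiset.count_cons_of_ne hne]
    exact (Multiset.count_le_of_le i (Multiset.erase_le _ _)).trans (hp i hi)

theorem OddDistinct.lt_maxPart_of_mem_erase (hp : OddDistinct p) (hodd : Odd (maxPart p)) {i : ℕ}
    (hi : i ∈ p.parts.erase (maxPart p)) : i < maxPart p := by
  refine (le_maxPart_of_mem_erase hi).lt_of_ne ?_
  rintro rfl
  have hpos : 0 < (p.parts.erase (maxPart p)).count (maxPart p) := Multiset.count_pos.2 hi
  have hcount := hp _ hodd
  rw [Multiset.count_erase_self] at hpos
  omega

theorem OddDistinct.one_lt_maxPart (hp : OddDistinct p) (hn : 1 < n) : 1 < maxPart p := by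
  by_contra! hmax
  have hones : p.parts = Multiset.replicate p.parts.card 1 :=
    Multiset.eq_replicate_card.2 fun i hi ↦
      le_antisymm ((le_maxPart hi).trans hmax) (p.parts_pos hi)
  have hcard : p.parts.card = n := by
    have hsum := p.parts_sum
    rwa [hones, Multiset.sum_replicate, smul_eq_mul, mul_one] at hsum
  have hcount : p.parts.card ≤ 1 := by
    have hcount_one := hp 1 odd_one
    rwa [hones, Multiset.count_replicate_self] at hcount_one
  omega

/-- Raise one copy of the largest part by one. The empty partition is sent to the partition `1`. -/
def raiseMaxPart (p : n.Partition) : (n + 1).Partition :=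
  replaceMaxPart p (maxPart p + 1) (Nat.succ_pos _) (by omega)

/-- Lower one copy of the largest part by one. The result need not have the lowered part as its
largest part, since the largest part of `q` may be repeated. -/
def lowerMaxPart (q : (n + 1).Partition) (hmax : 1 < maxPart q) : n.Partition :=
  replaceMaxPart q (maxPart q - 1) (Nat.sub_pos_of_lt hmax) (by omega)

theorem maxPart_raiseMaxPart (p : n.Partition) : maxPart (raiseMaxPart p) = maxPart p + 1 :=
  maxPart_replaceMaxPart _ _ fun _ hi ↦ (le_maxPart_of_mem_erase hi).trans (Nat.le_succ _)

theorem lowerMaxPart_raiseMaxPart (p : n.Partition) (hmax : 1 < maxPart (raiseMaxPart p)) :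
    lowerMaxPart (raiseMaxPart p) hmax = p := by
  unfold lowerMaxPart raiseMaxPart
  rw [replaceMaxPart_replaceMaxPart]
  exact fun _ hi ↦ (le_maxPart_of_mem_erase hi).trans (Nat.le_succ _)

theorem oddDistinct_raiseMaxPart (hp : OddDistinct p) : OddDistinct (raiseMaxPart p) :=
  oddDistinct_replaceMaxPart hp _ _ fun _ hi ↦
    (le_maxPart_of_mem_erase hi).not_gt (Nat.lt_succ_self _)

theorem oddDistinct_lowerMaxPart (hq : OddDistinct q) (hodd : Odd (maxPart q))
    (hmax : 1 < maxPart q) : OddDistinct (lowerMaxPart q hmax) :=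
  oddDistinct_replaceMaxPart hq _ _ fun hodd_sub ↦
    absurd (hodd.tsub_odd odd_one) (Nat.not_even_iff_odd.2 hodd_sub)

theorem maxPart_lowerMaxPart (hq : OddDistinct q) (hodd : Odd (maxPart q))
    (hmax : 1 < maxPart q) : maxPart (lowerMaxPart q hmax) = maxPart q - 1 :=
  maxPart_replaceMaxPart _ _ fun _ hi ↦
    Nat.le_sub_one_of_lt (hq.lt_maxPart_of_mem_erase hodd hi)

theorem raiseMaxPart_lowerMaxPart (hq : OddDistinct q) (hodd : Odd (maxPart q))
    (hmax : 1 < maxPart q) : raiseMaxPart (lowerMaxPart q hmax) = q := by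
  unfold raiseMaxPart lowerMaxPart
  rw [replaceMaxPart_replaceMaxPart]
  exact fun _ hi ↦ Nat.le_sub_one_of_lt (hq.lt_maxPart_of_mem_erase hodd hi)

end MaxPart

/-- Raising the largest part by one, as a bijection between partitions with distinct odd parts: even
largest part on the left, odd largest part on the right. -/
def raiseMaxPartEquiv {n : ℕ} (hn : 0 < n) :
    {p : n.Partition // OddDistinct p ∧ Even (maxPart p)} ≃
      {p : (n + 1).Partition // OddDistinct p ∧ Odd (maxPart p)} where
  toFun := fun ⟨p, hp, heven⟩ ↦
    ⟨raiseMaxPart p, oddDistinct_raiseMaxPart hp, by rw [maxPart_raiseMaxPart]; exact heven.add_one⟩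
  invFun := fun ⟨q, hq, hodd⟩ ↦
    have hmax : 1 < maxPart q := hq.one_lt_maxPart (Nat.succ_lt_succ hn)
    ⟨lowerMaxPart q hmax, oddDistinct_lowerMaxPart hq hodd hmax,
      by rw [maxPart_lowerMaxPart hq hodd]; exact hodd.tsub_odd odd_one⟩
  left_inv := fun ⟨p, hp, _⟩ ↦ Subtype.ext <| lowerMaxPart_raiseMaxPart p <|
    (oddDistinct_raiseMaxPart hp).one_lt_maxPart (Nat.succ_lt_succ hn)
  right_inv := fun ⟨_, hq, hodd⟩ ↦ Subtype.ext (raiseMaxPart_lowerMaxPart hq hodd _)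

theorem o1_eq_card_even_maxPart {n : ℕ} (hn : n ≠ 0) :
    o1 n = Nat.card {p : n.Partition // OddDistinct p ∧ Even (maxPart p)} := by
  simp only [o1, ne_eq, parts_ne_zero hn, not_false_eq_true, true_and]

theorem o1_eq_card_odd_maxPart_succ {n : ℕ} (hn : 0 < n) :
    o1 n = Nat.card {p : (n + 1).Partition // OddDistinct p ∧ ¬Even (maxPart p)} := by
  simp only [Nat.not_even_iff_odd]
  rw [o1_eq_card_even_maxPart hn.ne', Nat.card_congr (raiseMaxPartEquiv hn)]

theorem o1_add_o1_eq_pod : ∀ n : ℕ, 1 < n → o1 n + o1 (n - 1) = pod n := by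
  intro n hn
  rw [o1_eq_card_even_maxPart (by omega), o1_eq_card_odd_maxPart_succ (by omega : 0 < n - 1),
    Nat.sub_add_cancel hn.le]
  exact card_subtype_and_add_card_subtype_and_not OddDistinct fun p ↦ Even (maxPart p)
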